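/- Let a satisfy (H) with constant c > 0. Fix x₀ ∈ ℝ^N and set R = (1/(2c)) a(x₀)^{1/2}. Then for every x in the open ball B_{2R}(x₀) one has (1/2) a(x₀)^{1/2} ≤ a(x)^{1/2} ≤ (3/2) a(x₀)^{1/2}, and consequently (1/2)^k a(x₀)^{k/2} ≤ a(x)^{k/2} ≤ (3/2)^k a(x₀)^{k/2} for every natural number k. -/

import Mathlib

open Real Metric

/-! The gradient bound makes `√a` a `c / 2`-Lipschitz function, because `∇√a = ∇a / (2 * √a)`.
Points of the ball are within `2 * R = √(a x₀) / c` of `x₀`, so `√a` varies by at most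
`√(a x₀) / 2` there. Where `a` vanishes, `√a` need not be differentiable; the Lipschitz bound then
comes from that of `√(a + ε)` by letting `ε` tend to `0`. -/

section SqrtLipschitz

open Filter Topology

variable {E : Type*} [NormedAddCommGroup E] [NormedSpace ℝ E]
  {f : E → ℝ} {f' : E → StrongDual ℝ E} {s : Set E} {c : ℝ} {x y : E}

theorem abs_sqrt_sub_sqrt_le_of_norm_hasFDerivWithinAt_le_of_pos
    (hf : ∀ z ∈ s, HasFDerivWithinAt f (f' z) s z) (hpos : ∀ z ∈ s, 0 < f z)
    (hbound : ∀ z ∈ s, ‖f' z‖ ≤ c * √(f z)) (hs : Convex ℝ s) (hx : x ∈ s) (hy : y ∈ s) :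
    |√(f y) - √(f x)| ≤ c / 2 * ‖y - x‖ := by
  refine hs.norm_image_sub_le_of_norm_hasFDerivWithin_le
    (fun z hz => (hf z hz).sqrt (hpos z hz).ne') (fun z hz => ?_) hx hy
  have hsqrt : 0 < √(f z) := sqrt_pos.2 (hpos z hz)
  calc ‖(1 / (2 * √(f z))) • f' z‖ = 1 / (2 * √(f z)) * ‖f' z‖ := by
        rw [norm_smul, norm_of_nonneg (by positivity)]
    _ ≤ 1 / (2 * √(f z)) * (c * √(f z)) := by gcongr; exact hbound z hz
    _ = c / 2 := by field_simp

theorem abs_sqrt_sub_sqrt_le_of_norm_hasFDerivWithinAt_le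
    (hf : ∀ z ∈ s, HasFDerivWithinAt f (f' z) s z) (hnonneg : ∀ z ∈ s, 0 ≤ f z) (hc : 0 ≤ c)
    (hbound : ∀ z ∈ s, ‖f' z‖ ≤ c * √(f z)) (hs : Convex ℝ s) (hx : x ∈ s) (hy : y ∈ s) :
    |√(f y) - √(f x)| ≤ c / 2 * ‖y - x‖ := by
  have hperturbed : ∀ ε > 0, |√(f y + ε) - √(f x + ε)| ≤ c / 2 * ‖y - x‖ := fun ε hε =>
    abs_sqrt_sub_sqrt_le_of_norm_hasFDerivWithinAt_le_of_pos
      (fun z hz => (hf z hz).add_const ε) (fun z hz => add_pos_of_nonneg_of_pos (hnonneg z hz) hε)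
      (fun z hz => (hbound z hz).trans (by gcongr; exact le_add_of_nonneg_right hε.le)) hs hx hy
  have hlim : Tendsto (fun ε => |√(f y + ε) - √(f x + ε)|) (𝓝[>] 0)
      (𝓝 |√(f y) - √(f x)|) := by
    have hcont : Continuous fun ε => |√(f y + ε) - √(f x + ε)| := by fun_prop
    simpa only [add_zero] using (hcont.tendsto 0).mono_left nhdsWithin_le_nhds
  exact le_of_tendsto hlim (eventually_mem_nhdsWithin.mono hperturbed)

end SqrtLipschitz

theorem rpow_mul_rpow_div_two (p : ℝ) {r u : ℝ} (hr : 0 ≤ r) (hu : 0 ≤ u) :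
    r ^ p * u ^ (p / 2) = (r * √u) ^ p := by
  rw [rpow_div_two_eq_sqrt p hu, mul_rpow hr (sqrt_nonneg u)]

theorem norm_gradient {𝕜 F : Type*} [RCLike 𝕜] [NormedAddCommGroup F] [InnerProductSpace 𝕜 F]
    [CompleteSpace F] (f : F → 𝕜) (x : F) : ‖gradient f x‖ = ‖fderiv 𝕜 f x‖ :=
  LinearIsometryEquiv.norm_map _ _

theorem statement19_general {E : Type*} [NormedAddCommGroup E] [NormedSpace ℝ E]
    {a : E → ℝ} {c : ℝ} (hc : 0 < c) {x₀ : E} {R : ℝ} (hR : R = 1 / (2 * c) * √(a x₀))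
    (hdiff : DifferentiableOn ℝ a (ball x₀ (2 * R))) (hnonneg : ∀ x ∈ ball x₀ (2 * R), 0 ≤ a x)
    (hbound : ∀ x ∈ ball x₀ (2 * R), ‖fderiv ℝ a x‖ ≤ c * √(a x)) :
    ∀ x ∈ ball x₀ (2 * R), ∀ p : ℝ, 0 ≤ p →
      (1 / 2) ^ p * a x₀ ^ (p / 2) ≤ a x ^ (p / 2) ∧
      a x ^ (p / 2) ≤ (3 / 2) ^ p * a x₀ ^ (p / 2) := by
  intro x hx p hp
  have hx₀ : x₀ ∈ ball x₀ (2 * R) := mem_ball_self (pos_of_mem_ball hx)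
  have hderiv : ∀ z ∈ ball x₀ (2 * R), HasFDerivWithinAt a (fderiv ℝ a z) (ball x₀ (2 * R)) z :=
    fun z hz => (hdiff.differentiableAt (isOpen_ball.mem_nhds hz)).hasFDerivAt.hasFDerivWithinAt
  have hosc : |√(a x) - √(a x₀)| ≤ √(a x₀) / 2 :=
    calc |√(a x) - √(a x₀)| ≤ c / 2 * ‖x - x₀‖ :=
          abs_sqrt_sub_sqrt_le_of_norm_hasFDerivWithinAt_le hderiv hnonneg hc.le hbound
            (convex_ball x₀ (2 * R)) hx₀ hx
      _ ≤ c / 2 * (2 * R) := by gcongr; exact (mem_ball_iff_norm.1 hx).le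
      _ = √(a x₀) / 2 := by rw [hR]; field_simp
  obtain ⟨hlower, hupper⟩ := abs_le.1 hosc
  rw [rpow_mul_rpow_div_two p (by norm_num) (hnonneg x₀ hx₀),
    rpow_mul_rpow_div_two p (by norm_num) (hnonneg x₀ hx₀),
    rpow_div_two_eq_sqrt p (hnonneg x hx)]
  exact ⟨rpow_le_rpow (by positivity) (by linarith) hp,
    rpow_le_rpow (by positivity) (by linarith) hp⟩

theorem statement19 (N : ℕ) (hN : 1 ≤ N)
    (a : EuclideanSpace ℝ (Fin N) → ℝ) (c : ℝ) (hc : 0 < c)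
    (ha1 : ContDiff ℝ 1 a) (ha2 : ∀ x, 0 < a x)
    (ha3 : ∀ x, ‖gradient a x‖ ≤ c * (a x) ^ ((1 : ℝ) / 2))
    (x₀ : EuclideanSpace ℝ (Fin N)) (R : ℝ)
    (hR : R = (1 / (2 * c)) * (a x₀) ^ ((1 : ℝ) / 2)) :
    ∀ x ∈ ball x₀ (2 * R),
      ((1 : ℝ) / 2) * (a x₀) ^ ((1 : ℝ) / 2) ≤ (a x) ^ ((1 : ℝ) / 2) ∧
      (a x) ^ ((1 : ℝ) / 2) ≤ ((3 : ℝ) / 2) * (a x₀) ^ ((1 : ℝ) / 2) ∧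
      ∀ k : ℕ,
        ((1 : ℝ) / 2) ^ k * (a x₀) ^ ((k : ℝ) / 2) ≤ (a x) ^ ((k : ℝ) / 2) ∧
        (a x) ^ ((k : ℝ) / 2) ≤ ((3 : ℝ) / 2) ^ k * (a x₀) ^ ((k : ℝ) / 2) := by
  intro x hx
  have hbounds := statement19_general hc (by rwa [sqrt_eq_rpow])
    (ha1.differentiable one_ne_zero).differentiableOn (fun y _ => (ha2 y).le)
    (fun y _ => by rw [← norm_gradient, sqrt_eq_rpow]; exact ha3 y) x hx
  exact ⟨by simpa only [rpow_one] using (hbounds 1 zero_le_one).1,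
    by simpa only [rpow_one] using (hbounds 1 zero_le_one).2,
    fun k => by simpa only [rpow_natCast] using hbounds k k.cast_nonneg⟩
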